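/- Let q = r² for a prime power r, let C ≤ F_q^{2n} be a Hermitian self-dual code, and let E ≤ C be a subspace of dimension n−1. Then the number of Hermitian self-dual codes D ≤ F_q^{2n} with E ≤ D is exactly r+1. -/

import Mathlib

noncomputable section

namespace KneserHeckeCodes

open Finset

variable {F : Type} [Field F] [Fintype F]

/-- The all-ones vector. -/
def allOnes (F : Type) [One F] (N : ℕ) : Fin N → F := fun _ => 1

/-- The dual code with respect to the (bilinear or Hermitian) form
`b(x,y) = ∑ i, x i * f (y i)`. -/
def dualCode {N : ℕ} (f : F → F) (C : Submodule F (Fin N → F)) : Submodule F (Fin N → F) where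
  carrier := {v | ∀ c ∈ C, ∑ i, v i * f (c i) = 0}
  add_mem' := by
    intro a b ha hb c hc
    have h1 := ha c hc
    have h2 := hb c hc
    change ∑ i, a i * f (c i) = 0 at h1
    change ∑ i, b i * f (c i) = 0 at h2
    change ∑ i, (a + b) i * f (c i) = 0
    simp [Pi.add_apply, add_mul, Finset.sum_add_distrib, h1, h2]
  zero_mem' := by
    intro c hc
    simp
  smul_mem' := by
    intro r a ha c hc
    have h := ha c hc
    change ∑ i, a i * f (c i) = 0 at h
    change ∑ i, (r • a) i * f (c i) = 0
    simp [Pi.smul_apply, smul_eq_mul, mul_assoc, ← Finset.mul_sum, h]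

/-- Action of a coordinate permutation on a code. -/
def permCode {N : ℕ} (π : Equiv.Perm (Fin N)) (C : Submodule F (Fin N → F)) :
    Submodule F (Fin N → F) :=
  C.map (LinearMap.funLeft F F π)

/-- Permutation equivalence of codes. -/
def equivCode {N : ℕ} (C D : Submodule F (Fin N → F)) : Prop :=
  ∃ π : Equiv.Perm (Fin N), permCode π C = D

/-- The order of the automorphism group of a code. -/
def autCard {N : ℕ} (C : Submodule F (Fin N → F)) : ℕ :=
  Nat.card {π : Equiv.Perm (Fin N) // permCode π C = C}

/-- `mon c v` is the number of columns of the `m × N` matrix with rows `c` equal to `v`. -/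
def mon {m N : ℕ} (c : Fin m → (Fin N → F)) (v : Fin m → F) : ℕ :=
  Nat.card {i : Fin N // ∀ j, c j i = v j}

/-- `aX X C` is the number of `m`-tuples of codewords of `C` with monomial `X`. -/
def aX {m N : ℕ} (X : (Fin m → F) → ℕ) (C : Submodule F (Fin N → F)) : ℕ :=
  Nat.card {c : Fin m → (Fin N → F) // (∀ j, c j ∈ C) ∧ mon c = X}

/-- The set `M_m` of monomials of degree `N` in genus `m`. -/
def MmSet (F : Type) [Fintype F] (m N : ℕ) : Set ((Fin m → F) → ℕ) :=
  {X | ∑ v, X v = N}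

/-- The rank of a monomial. -/
def rkX (F : Type) [Field F] {m : ℕ} (X : (Fin m → F) → ℕ) : ℕ :=
  Module.finrank F (Submodule.span F {v : Fin m → F | 0 < X v})

/-- The set `M*_m` of monomials of degree `N` and full rank `m`. -/
def MstarSet (F : Type) [Field F] [Fintype F] (m N : ℕ) : Set ((Fin m → F) → ℕ) :=
  {X | X ∈ MmSet F m N ∧ rkX F X = m}

instance finiteSubmodule {N : ℕ} : Finite (Submodule F (Fin N → F)) :=
  Finite.of_injective (fun C => (C : Set (Fin N → F))) SetLike.coe_injective

/-- The set of equivalence classes of codes in the family `𝓕`. -/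
abbrev ClassesB {N : ℕ} (𝓕 : Set (Submodule F (Fin N → F))) : Type :=
  Quot (fun C D : 𝓕 => equivCode C.1 D.1)

/-- The equivalence class of a code. -/
def clsOf {N : ℕ} {𝓕 : Set (Submodule F (Fin N → F))} (C : 𝓕) : ClassesB 𝓕 :=
  Quot.mk _ C

/-- A representative of an equivalence class. -/
def repB {N : ℕ} {𝓕 : Set (Submodule F (Fin N → F))} (b : ClassesB 𝓕) : 𝓕 :=
  Quot.out b

/-- The Hermitian inner product on `V` with `([C],[D]) = |Aut C| δ_{[C],[D]}`. -/
def innerV {N : ℕ} (𝓕 : Set (Submodule F (Fin N → F))) (v w : ClassesB 𝓕 → ℂ) : ℂ :=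
  letI : Fintype (ClassesB 𝓕) := Fintype.ofFinite _
  ∑ b : ClassesB 𝓕, (starRingEnd ℂ) (v b) * w b * (autCard (repB b).1 : ℂ)

/-- The `k`-th Kneser-Hecke operator `T_k` on `V`, where `n` is the dimension of the codes:
`T_k [C] = ∑_{D ∈ 𝓕, dim (C ⊓ D) = n - k} [D]`. -/
def heckeT {N : ℕ} (𝓕 : Set (Submodule F (Fin N → F))) (n k : ℕ)
    (v : ClassesB 𝓕 → ℂ) : ClassesB 𝓕 → ℂ :=
  letI : Fintype (ClassesB 𝓕) := Fintype.ofFinite _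
  fun b' => ∑ b : ClassesB 𝓕, v b *
    (Nat.card {D : 𝓕 // Module.finrank F ↥((repB b).1 ⊓ D.1) + k = n ∧ clsOf D = b'} : ℂ)

/-- The linear extension of `a_X` to `V`. -/
def aXc {N m : ℕ} (𝓕 : Set (Submodule F (Fin N → F))) (X : (Fin m → F) → ℕ)
    (v : ClassesB 𝓕 → ℂ) : ℂ :=
  letI : Fintype (ClassesB 𝓕) := Fintype.ofFinite _
  ∑ b : ClassesB 𝓕, v b * (aX X (repB b).1 : ℂ)

/-- `V_m`, the joint kernel of all `a_X`, `X ∈ M_m`. -/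
def VmSet {N : ℕ} (𝓕 : Set (Submodule F (Fin N → F))) (m : ℕ) : Set (ClassesB 𝓕 → ℂ) :=
  {v | ∀ X ∈ MmSet F m N, aXc 𝓕 X v = 0}

/-- `V_{m-1}` (with `V_{-1} = V`). -/
def VmPred {N : ℕ} (𝓕 : Set (Submodule F (Fin N → F))) (m : ℕ) : Set (ClassesB 𝓕 → ℂ) :=
  match m with
  | 0 => Set.univ
  | m + 1 => VmSet 𝓕 m

/-- `W_m = V_m^⊥`. -/
def WmSet {N : ℕ} (𝓕 : Set (Submodule F (Fin N → F))) (m : ℕ) : Set (ClassesB 𝓕 → ℂ) :=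
  {w | ∀ v ∈ VmSet 𝓕 m, innerV 𝓕 w v = 0}

/-- `Y_m = W_m ∩ V_{m-1}`. -/
def YmSet {N : ℕ} (𝓕 : Set (Submodule F (Fin N → F))) (m : ℕ) : Set (ClassesB 𝓕 → ℂ) :=
  WmSet 𝓕 m ∩ VmPred 𝓕 m

/-- `∑_{E ∈ E_C(c)} α_E`, counted as the number of pairs `(E, D)` with `E ≤ C` of
dimension `n-1` containing all entries of `c` and `D ∈ 𝓕` with `D ⊓ C = E`. -/
def pairCount {N : ℕ} (𝓕 : Set (Submodule F (Fin N → F))) (n : ℕ)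
    (C : Submodule F (Fin N → F)) {m : ℕ} (c : Fin m → (Fin N → F)) : ℕ :=
  Nat.card {ED : Submodule F (Fin N → F) × 𝓕 //
    ED.1 ≤ C ∧ Module.finrank F ↥ED.1 + 1 = n ∧ (∀ j, c j ∈ ED.1) ∧ ED.2.1 ⊓ C = ED.1}

/-- Condition ⋆ at level `m` for the subset `M⁰ ⊆ M*_m` with constant `α`. -/
def CondStar {N : ℕ} (𝓕 : Set (Submodule F (Fin N → F))) (n m : ℕ)
    (M0 : Set ((Fin m → F) → ℕ)) (α : ℕ) : Prop :=
  M0 ⊆ MstarSet F m N ∧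
  VmSet 𝓕 m = {v | v ∈ VmPred 𝓕 m ∧ ∀ X ∈ M0, aXc 𝓕 X v = 0} ∧
  ∀ C ∈ 𝓕, ∀ c : Fin m → (Fin N → F), (∀ j, c j ∈ C) → mon c ∈ M0 →
    pairCount 𝓕 n C c = α

/-- The genus-`m` complete weight enumerator. -/
def cwe {N : ℕ} (m : ℕ) (C : Submodule F (Fin N → F)) : MvPolynomial (Fin m → F) ℂ :=
  letI : Fintype C := Fintype.ofFinite _
  ∑ c : Fin m → C, MvPolynomial.monomial
    (Finsupp.equivFunOnFinite.symm (mon (fun j => (c j : Fin N → F)))) (1 : ℂ)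

end KneserHeckeCodes

open KneserHeckeCodes

/-!
For a self-dual `C` and a hyperplane `E` of `C`, the quotient `Eᗮ / E` is a Hermitian hyperbolic
plane with basis `u ∈ C` and `w`, where `b(u, u) = 0` and `b(u, w) = 1`. The self-dual spaces above
`E` correspond to its isotropic lines: the line of `u`, which is `C / E`, and the lines of
`w + a • u` with `a + a ^ r = -b(w, w)`. As `-b(w, w)` is fixed by `x ↦ x ^ r`, this equation has
`r` solutions: it is the trace equation of the quadratic extension `F_{r²} / F_r`.
-/

section Orthogonal

variable {K V : Type*} [Field K] [AddCommGroup V] [Module K V] {σ : K →+* K}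
  {B : V →ₛₗ[σ] V →ₗ[K] K}

theorem mem_orthogonalBilin_sup_span_singleton {E : Submodule K V} {v x : V} :
    x ∈ (E ⊔ K ∙ v).orthogonalBilin B ↔ x ∈ E.orthogonalBilin B ∧ B v x = 0 := by
  refine ⟨fun h ↦ ⟨fun e he ↦ h e (Submodule.mem_sup_left he),
    h v (Submodule.mem_sup_right (Submodule.mem_span_singleton_self v))⟩, ?_⟩
  rintro ⟨hE, hv⟩ y hy
  obtain ⟨e, he, z, hz, rfl⟩ := Submodule.mem_sup.1 hy
  obtain ⟨k, rfl⟩ := Submodule.mem_span_singleton.1 hz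
  simp [hE e he, hv]

theorem finrank_submodule_map_semilinear [RingHomSurjective σ] {W : Type*} [AddCommGroup W]
    [Module K W] {f : V →ₛₗ[σ] W} (hf : Function.Injective f) (U : Submodule K V) :
    Module.finrank K (U.map f) = Module.finrank K U := by
  let e : U ≃+ U.map f :=
    { Equiv.Set.image f U hf with map_add' := fun x y ↦ Subtype.ext (map_add f x.1 y.1) }
  have hrank := lift_rank_eq_of_equiv_equiv σ e ⟨σ.injective, σ.surjective⟩
    fun k x ↦ Subtype.ext (map_smulₛₗ f k x.1)
  simpa [Module.finrank] using congrArg Cardinal.toNat hrank.symm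

theorem finrank_add_finrank_orthogonalBilin [RingHomSurjective σ] [FiniteDimensional K V]
    (hB : B.SeparatingLeft) (U : Submodule K V) :
    Module.finrank K U + Module.finrank K (U.orthogonalBilin B) = Module.finrank K V := by
  have hinj : Function.Injective B :=
    LinearMap.ker_eq_bot.1 (LinearMap.separatingLeft_iff_ker_eq_bot.1 hB)
  have hperp : U.orthogonalBilin B = (U.map B).dualCoannihilator := by
    ext x
    simp [Submodule.mem_dualCoannihilator]
  rw [hperp, ← finrank_submodule_map_semilinear hinj,
    Subspace.finrank_add_finrank_dualCoannihilator_eq]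

end Orthogonal

section SelfDual

variable {K V : Type*} [Field K] [AddCommGroup V] [Module K V] {σ : K →+* K}
  {B : V →ₛₗ[σ] V →ₗ[K] K}

/-- `D` is self-dual (Lagrangian) for the sesquilinear form `B`: it is its own orthogonal
complement. The form is semilinear in its first argument, as in Mathlib, so `B x y` is the `b y x`
of coding theory. -/
def IsSelfDual (B : V →ₛₗ[σ] V →ₗ[K] K) (D : Submodule K V) : Prop :=
  D = D.orthogonalBilin B

namespace IsSelfDual

variable {C D E : Submodule K V} {u v w x y : V}

theorem mem_iff (hD : IsSelfDual B D) : x ∈ D ↔ ∀ y ∈ D, B y x = 0 :=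
  SetLike.ext_iff.1 hD x

theorem le_orthogonalBilin (hD : IsSelfDual B D) (hE : E ≤ D) : D ≤ E.orthogonalBilin B :=
  hD.le.trans (Submodule.orthogonalBilin_le hE)

theorem eq_of_le (hC : IsSelfDual B C) (hD : IsSelfDual B D) (h : C ≤ D) : C = D :=
  h.antisymm ((hD.le_orthogonalBilin h).trans hC.ge)

theorem two_mul_finrank [RingHomSurjective σ] [FiniteDimensional K V] (hB : B.SeparatingLeft)
    (hD : IsSelfDual B D) : 2 * Module.finrank K D = Module.finrank K V := by
  rw [← finrank_add_finrank_orthogonalBilin hB D, ← hD, two_mul]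

theorem mem_sup_span_singleton (hu : IsSelfDual B (E ⊔ K ∙ u)) (hx : x ∈ E.orthogonalBilin B)
    (hux : B u x = 0) : x ∈ E ⊔ K ∙ u :=
  hu.ge (mem_orthogonalBilin_sup_span_singleton.2 ⟨hx, hux⟩)

theorem apply_self_eq_zero (hu : IsSelfDual B (E ⊔ K ∙ u)) : B u u = 0 :=
  have hu' : u ∈ E ⊔ K ∙ u := Submodule.mem_sup_right (Submodule.mem_span_singleton_self u)
  hu.mem_iff.1 hu' u hu'

theorem sup_span_singleton_of_isotropic (hB : B.IsSymm) (hu : IsSelfDual B (E ⊔ K ∙ u))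
    (hv : v ∈ E.orthogonalBilin B) (huv : B u v = 1) (hvv : B v v = 0) :
    IsSelfDual B (E ⊔ K ∙ v) := by
  have hEE : E ≤ E.orthogonalBilin B := le_sup_left.trans (hu.le_orthogonalBilin le_sup_left)
  have hvE : ∀ e ∈ E, B v e = 0 := fun e he ↦ hB.isRefl e v (hv e he)
  have hvu : B v u = 1 := by rw [← hB.eq u v, huv, map_one]
  apply le_antisymm
  · rw [sup_le_iff, Submodule.span_singleton_le_iff_mem]
    exact ⟨fun e he ↦ mem_orthogonalBilin_sup_span_singleton.2 ⟨hEE he, hvE e he⟩,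
      mem_orthogonalBilin_sup_span_singleton.2 ⟨hv, hvv⟩⟩
  · intro x hx
    obtain ⟨hxE, hvx⟩ := mem_orthogonalBilin_sup_span_singleton.1 hx
    have hproj : x - B u x • v ∈ E ⊔ K ∙ u :=
      hu.mem_sup_span_singleton (sub_mem hxE (Submodule.smul_mem _ _ hv)) (by simp [huv])
    obtain ⟨e, he, z, hz, hez⟩ := Submodule.mem_sup.1 hproj
    obtain ⟨k, rfl⟩ := Submodule.mem_span_singleton.1 hz
    have hk : k = 0 := by simpa [hvE e he, hvu, hvx, hvv] using congrArg (B v) hez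
    rw [hk, zero_smul, add_zero] at hez
    exact Submodule.mem_sup.2 ⟨e, he, B u x • v,
      Submodule.mem_span_singleton.2 ⟨_, rfl⟩, by rw [hez, sub_add_cancel]⟩

theorem apply_add_smul_self (hB : B.IsSymm) (hu : IsSelfDual B (E ⊔ K ∙ u)) (huw : B u w = 1)
    (a : K) : B (w + a • u) (w + a • u) = B w w + (a + σ a) := by
  have hwu : B w u = 1 := by rw [← hB.eq u w, huw, map_one]
  simp [hu.apply_self_eq_zero, huw, hwu, add_assoc]

theorem ne_sup_span_singleton (hu : IsSelfDual B (E ⊔ K ∙ u)) (huv : B u v ≠ 0) :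
    E ⊔ K ∙ u ≠ E ⊔ K ∙ v := by
  intro h
  have hv : v ∈ E ⊔ K ∙ u := h ▸ Submodule.mem_sup_right (Submodule.mem_span_singleton_self v)
  exact huv (mem_orthogonalBilin_sup_span_singleton.1 (hu.le hv)).2

theorem sup_span_singleton_add_smul_injective (hB : B.IsSymm) (hu : IsSelfDual B (E ⊔ K ∙ u))
    (hw : w ∈ E.orthogonalBilin B) (huw : B u w = 1) :
    Function.Injective fun a : K ↦ E ⊔ K ∙ (w + a • u) := by
  intro a b hab
  dsimp only at hab
  have hwE : ∀ e ∈ E, B w e = 0 := fun e he ↦ hB.isRefl e w (hw e he)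
  have huE : ∀ e ∈ E, B u e = 0 := fun e he ↦
    (mem_orthogonalBilin_sup_span_singleton.1 (hu.le (Submodule.mem_sup_left he))).2
  have hwu : B w u = 1 := by rw [← hB.eq u w, huw, map_one]
  have hb : w + b • u ∈ E ⊔ K ∙ (w + a • u) :=
    hab ▸ Submodule.mem_sup_right (Submodule.mem_span_singleton_self _)
  obtain ⟨e, he, z, hz, hez⟩ := Submodule.mem_sup.1 hb
  obtain ⟨k, rfl⟩ := Submodule.mem_span_singleton.1 hz
  have hk : k = 1 := by
    simpa [huE e he, huw, hu.apply_self_eq_zero] using congrArg (B u) hez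
  simpa [hwE e he, hk, hwu] using congrArg (B w) hez

theorem exists_add_smul_mem (hu : IsSelfDual B (E ⊔ K ∙ u)) (hw : w ∈ E.orthogonalBilin B)
    (huw : B u w = 1) (hD : IsSelfDual B D) (hE : E ≤ D) (hx : x ∈ D) (hux : B u x ≠ 0) :
    ∃ a : K, w + a • u ∈ D := by
  set y := (B u x)⁻¹ • x with hy
  have hyD : y ∈ D := Submodule.smul_mem _ _ hx
  have huy : B u y = 1 := by simp [hy, hux]
  have hyw : y - w ∈ E ⊔ K ∙ u := hu.mem_sup_span_singleton
    (sub_mem (hD.le_orthogonalBilin hE hyD) hw) (by simp [huy, huw])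
  obtain ⟨e, he, z, hz, hez⟩ := Submodule.mem_sup.1 hyw
  obtain ⟨a, rfl⟩ := Submodule.mem_span_singleton.1 hz
  refine ⟨a, ?_⟩
  have hya : w + a • u = y - e := by rw [eq_sub_iff_add_eq, add_assoc, add_comm _ e, hez]; abel
  exact hya ▸ sub_mem hyD (hE he)

theorem setOf_above_eq (hB : B.IsSymm) (hu : IsSelfDual B (E ⊔ K ∙ u))
    (hw : w ∈ E.orthogonalBilin B) (huw : B u w = 1) :
    {D | IsSelfDual B D ∧ E ≤ D} =
      insert (E ⊔ K ∙ u) ((fun a : K ↦ E ⊔ K ∙ (w + a • u)) '' {a | a + σ a = -B w w}) := by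
  have huE : u ∈ E.orthogonalBilin B := hu.le_orthogonalBilin le_sup_left
    (Submodule.mem_sup_right (Submodule.mem_span_singleton_self u))
  have hisotropic (a : K) : B (w + a • u) (w + a • u) = 0 ↔ a + σ a = -B w w := by
    rw [hu.apply_add_smul_self hB huw, add_comm, eq_neg_iff_add_eq_zero]
  have hline {a : K} (ha : a + σ a = -B w w) : IsSelfDual B (E ⊔ K ∙ (w + a • u)) :=
    hu.sup_span_singleton_of_isotropic hB (add_mem hw (Submodule.smul_mem _ a huE))
      (by simp [huw, hu.apply_self_eq_zero]) ((hisotropic a).2 ha)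
  ext D
  constructor
  · rintro ⟨hD, hE⟩
    by_cases hDu : ∀ x ∈ D, B u x = 0
    · have hle : D ≤ E ⊔ K ∙ u := fun x hx ↦
        hu.mem_sup_span_singleton (hD.le_orthogonalBilin hE hx) (hDu x hx)
      exact .inl (hD.eq_of_le hu hle)
    · push Not at hDu
      obtain ⟨x, hx, hux⟩ := hDu
      obtain ⟨a, haD⟩ := hu.exists_add_smul_mem hw huw hD hE hx hux
      have ha : a + σ a = -B w w := (hisotropic a).1 (hD.mem_iff.1 haD _ haD)
      exact .inr ⟨a, ha, (hline ha).eq_of_le hD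
        (sup_le hE ((Submodule.span_singleton_le_iff_mem _ _).2 haD))⟩
  · rintro (rfl | ⟨a, ha, rfl⟩)
    · exact ⟨hu, le_sup_left⟩
    · exact ⟨hline ha, le_sup_left⟩

theorem encard_setOf_above (hB : B.IsSymm) (hu : IsSelfDual B (E ⊔ K ∙ u))
    (hw : w ∈ E.orthogonalBilin B) (huw : B u w = 1) :
    {D | IsSelfDual B D ∧ E ≤ D}.encard = {a : K | a + σ a = -B w w}.encard + 1 := by
  rw [hu.setOf_above_eq hB hw huw, Set.encard_insert_of_notMem,
    (hu.sup_span_singleton_add_smul_injective hB hw huw).encard_image]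
  rintro ⟨a, -, ha⟩
  exact hu.ne_sup_span_singleton (by simp [huw, hu.apply_self_eq_zero]) ha.symm

theorem exists_sup_span_singleton_eq [RingHomSurjective σ] [FiniteDimensional K V]
    (hB : B.SeparatingLeft) (hC : IsSelfDual B C) (hE : E ≤ C)
    (hdim : Module.finrank K E + 1 = Module.finrank K C) :
    ∃ u, ∃ w ∈ E.orthogonalBilin B, E ⊔ K ∙ u = C ∧ B u w = 1 := by
  have hEC : E < C := hE.lt_of_ne (by rintro rfl; omega)
  obtain ⟨u, huC, huE⟩ := SetLike.exists_of_lt hEC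
  have hu : E ⊔ K ∙ u = C := by
    have hlt := Submodule.finrank_lt_finrank_of_lt (Submodule.lt_sup_iff_notMem.2 huE)
    refine Submodule.eq_of_le_of_finrank_le ?_ (by omega)
    exact sup_le hE ((Submodule.span_singleton_le_iff_mem _ _).2 huC)
  have hCE : C < E.orthogonalBilin B := by
    refine (hC.le_orthogonalBilin hE).lt_of_ne fun h ↦ ?_
    have hsum := finrank_add_finrank_orthogonalBilin hB E
    rw [← h, ← hC.two_mul_finrank hB] at hsum
    omega
  obtain ⟨w, hwE, hwC⟩ := SetLike.exists_of_lt hCE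
  subst hu
  have huw : B u w ≠ 0 := fun h ↦ hwC (hC.mem_sup_span_singleton hwE h)
  exact ⟨u, (B u w)⁻¹ • w, Submodule.smul_mem _ _ hwE, rfl, by simp [huw]⟩

end IsSelfDual

end SelfDual

section Trace

open Polynomial in
theorem ncard_setOf_pow_add_mul_eq_le {R : Type*} [CommRing R] [IsDomain R] {r : ℕ} (hr : 1 < r)
    (b c : R) : {a : R | a ^ r + b * a = c}.ncard ≤ r := by
  let p : R[X] := X ^ r + (C b * X + C (-c))
  have hlt : (C b * X + C (-c)).degree < (r : WithBot ℕ) :=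
    degree_linear_le.trans_lt (Nat.one_lt_cast.2 hr)
  have hp : p.Monic := monic_X_pow_add hlt
  have hdeg : p.natDegree = r := by
    rw [natDegree_add_eq_left_of_degree_lt (by rwa [degree_X_pow]), natDegree_X_pow]
  have hroots : {a : R | a ^ r + b * a = c} = p.rootSet R := by
    ext a
    rw [mem_rootSet_of_ne hp.ne_zero]
    simp [p, ← add_assoc, ← sub_eq_add_neg, sub_eq_zero]
  exact hroots ▸ (ncard_rootSet_le p R).trans_eq hdeg

variable {K : Type*} [Field K] [Finite K] {σ : K →+* K} {r : ℕ}

theorem involutive_of_forall_eq_pow (hcard : Nat.card K = r ^ 2) (hσ : ∀ x, σ x = x ^ r) :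
    Function.Involutive σ := fun x ↦ by
  have := Fintype.ofFinite K
  rw [hσ, hσ, ← pow_mul, ← pow_two, ← hcard, Nat.card_eq_fintype_card, FiniteField.pow_card]

/-- The kernel of `a ↦ a + σ a` and the fixed field of `σ`, which contains the image, consist of
roots of polynomials of degree `r`. As `K` has `r ^ 2` elements, both bounds are attained. -/
theorem ncard_setOf_add_map_eq (hcard : Nat.card K = r ^ 2) (hσ : ∀ x, σ x = x ^ r) {c : K}
    (hc : σ c = c) : {a : K | a + σ a = c}.ncard = r := by
  have hr : 1 < r := (Nat.one_lt_pow_iff two_ne_zero).1 (hcard ▸ Finite.one_lt_card)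
  have hinv := involutive_of_forall_eq_pow hcard hσ
  let T : K →+ K := AddMonoidHom.id K + σ.toAddMonoidHom
  have hker : (T.ker : Set K).ncard ≤ r := by
    convert ncard_setOf_pow_add_mul_eq_le hr (1 : K) 0 using 2
    ext a
    simp [T, AddMonoidHom.mem_ker, hσ, add_comm]
  have hfix : {a : K | σ a = a}.ncard ≤ r := by
    convert ncard_setOf_pow_add_mul_eq_le hr (-1 : K) 0 using 2
    ext a
    simp [hσ, ← sub_eq_add_neg, sub_eq_zero]
  have hrange : (T.range : Set K) ⊆ {a | σ a = a} := by
    rintro _ ⟨a, rfl⟩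
    simp [T, hinv a, add_comm]
  have hmul : (T.ker : Set K).ncard * (T.range : Set K).ncard = r ^ 2 := by
    rw [← hcard, ← T.ker.card_mul_index, AddSubgroup.index_ker]; rfl
  have hle : (T.range : Set K).ncard ≤ r := (Set.ncard_le_ncard hrange).trans hfix
  have hker_eq : (T.ker : Set K).ncard = r := by nlinarith
  have hrange_eq : (T.range : Set K).ncard = r := by nlinarith
  obtain ⟨a, rfl⟩ : c ∈ T.range := by
    change c ∈ (T.range : Set K)
    rwa [Set.eq_of_subset_of_ncard_le hrange (hfix.trans_eq hrange_eq.symm)]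
  have hfiber : {b : K | b + σ b = T a} = (a + ·) '' (T.ker : Set K) := by
    ext b
    rw [Set.mem_image_iff_of_inverse (neg_add_cancel_left a) (add_neg_cancel_left a)]
    rw [SetLike.mem_coe, T.mem_ker, map_add, map_neg, neg_add_eq_zero, eq_comm]
    rfl
  rw [hfiber, Set.ncard_image_of_injective _ (add_right_injective a), hker_eq]

theorem exists_ringHom_eq_pow {F : Type*} [Field F] [Fintype F] (hr : IsPrimePow r) {m : ℕ}
    (hcard : Fintype.card F = r ^ m) : ∃ σ : F →+* F, ∀ x, σ x = x ^ r := by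
  obtain ⟨p, k, hp, -, rfl⟩ := hr
  have : Fact p.Prime := ⟨hp.nat_prime⟩
  have : CharP F p := charP_of_card_eq_prime_pow (hcard.trans (pow_mul p k m).symm)
  exact ⟨iterateFrobenius F p k, iterateFrobenius_def p k⟩

end Trace

section HermitianForm

variable {K ι : Type*} [Field K] [Fintype ι] (σ : K →+* K)

/-- The standard Hermitian form `∑ i, σ (x i) * y i`, taken semilinear in its first argument; it
is Hermitian when `σ` is an involution. -/
def hermitianForm : (ι → K) →ₛₗ[σ] (ι → K) →ₗ[K] K :=
  LinearMap.mk₂'ₛₗ σ (RingHom.id K) (fun x y ↦ ∑ i, σ (x i) * y i)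
    (fun x y z ↦ by simp [add_mul, Finset.sum_add_distrib])
    (fun c x y ↦ by simp [Finset.mul_sum, mul_assoc])
    (fun x y z ↦ by simp [mul_add, Finset.sum_add_distrib])
    (fun c x y ↦ by simp [Finset.mul_sum, mul_left_comm])

theorem hermitianForm_apply (x y : ι → K) : hermitianForm σ x y = ∑ i, σ (x i) * y i := rfl

variable {σ}

theorem isSymm_hermitianForm (hσ : Function.Involutive σ) :
    (hermitianForm (ι := ι) σ).IsSymm where
  eq x y := by simp [hermitianForm_apply, hσ _, mul_comm]

theorem separatingLeft_hermitianForm : (hermitianForm (ι := ι) σ).SeparatingLeft := by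
  classical
  intro x hx
  ext i
  simpa [hermitianForm_apply, Pi.single_apply] using hx (Pi.single i 1)

theorem dualCode_eq_orthogonalBilin {F : Type} [Field F] {σ : F →+* F} {N : ℕ}
    (C : Submodule F (Fin N → F)) :
    dualCode (fun x ↦ σ x) C = C.orthogonalBilin (hermitianForm σ) := by
  ext v
  simp [dualCode, hermitianForm_apply, mul_comm]

end HermitianForm

theorem selfDual_count_above_qH_general {K V : Type*} [Field K] [Finite K] [AddCommGroup V]
    [Module K V] [FiniteDimensional K V] {r : ℕ} (hcard : Nat.card K = r ^ 2) {σ : K →+* K}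
    (hσ : ∀ x, σ x = x ^ r) {B : V →ₛₗ[σ] V →ₗ[K] K} (hB : B.IsSymm) (hB' : B.SeparatingLeft)
    {C E : Submodule K V} (hC : IsSelfDual B C) (hE : E ≤ C)
    (hdim : Module.finrank K E + 1 = Module.finrank K C) :
    Nat.card {D : Submodule K V // IsSelfDual B D ∧ E ≤ D} = r + 1 := by
  have : RingHomSurjective σ := ⟨(involutive_of_forall_eq_pow hcard hσ).surjective⟩
  obtain ⟨u, w, hw, rfl, huw⟩ := hC.exists_sup_span_singleton_eq hB' hE hdim
  have hww : σ (-B w w) = -B w w := by rw [map_neg, hB.eq]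
  have hcount : {D | IsSelfDual B D ∧ E ≤ D}.ncard = {a : K | a + σ a = -B w w}.ncard + 1 := by
    rw [Set.ncard_def, hC.encard_setOf_above hB hw huw, ← (Set.toFinite _).cast_ncard_eq]
    rfl
  rw [← ncard_setOf_add_map_eq hcard hσ hww, ← hcount]
  exact Nat.card_coe_set_eq _

/-- For `q = r²`, a Hermitian self-dual code `C ≤ F_q^{2n}` and a subspace
`E ≤ C` of dimension `n-1`, there are exactly `r + 1` Hermitian self-dual codes `D` with
`E ≤ D`. -/
theorem selfDual_count_above_qH
    {F : Type} [Field F] [Fintype F] (r : ℕ) (hr : IsPrimePow r)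
    (hcard : Fintype.card F = r ^ 2) {n : ℕ}
    (C : Submodule F (Fin (2 * n) → F)) (hC : C = dualCode (fun x : F => x ^ r) C)
    (E : Submodule F (Fin (2 * n) → F)) (hE : E ≤ C)
    (hdim : Module.finrank F ↥E + 1 = n) :
    Nat.card {D : Submodule F (Fin (2 * n) → F) //
        D = dualCode (fun x : F => x ^ r) D ∧ E ≤ D} = r + 1 := by
  obtain ⟨σ, hσ⟩ := exists_ringHom_eq_pow hr hcard
  have hcard' : Nat.card F = r ^ 2 := by rw [Nat.card_eq_fintype_card, hcard]
  have hinv := involutive_of_forall_eq_pow hcard' hσ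
  have : RingHomSurjective σ := ⟨hinv.surjective⟩
  simp only [← hσ, dualCode_eq_orthogonalBilin] at hC ⊢
  have hfinrank := IsSelfDual.two_mul_finrank separatingLeft_hermitianForm hC
  rw [Module.finrank_fin_fun] at hfinrank
  exact selfDual_count_above_qH_general hcard' hσ (isSymm_hermitianForm hinv)
    separatingLeft_hermitianForm hC hE (by omega)
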